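/- Let P be an algebraically closed field, n ≥ 1, and A = P[x_1,…,x_n]. Then every automorphism of the monoid End(A) is semiinner: for every monoid automorphism τ of End(A) there exist a field automorphism α : P → P and a P-algebra automorphism η of A such that, setting μ = ᾱ ∘ η (where ᾱ : A → A is the ring automorphism applying α to each coefficient of a polynomial), one has τ(s) = μ ∘ s ∘ μ⁻¹ (as maps A → A) for every s ∈ End(A). In particular, the group Aut(End(P[x_1,…,x_n])) is generated by semiinner automorphisms. -/

import Mathlib

open MvPolynomial

/-- affine normal form of bijections of a field normalizing polynomial maps -/
lemma field_case {P : Type*} [Field P] [Infinite P] (ν : P ≃ P)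
    (h : ∀ p : Polynomial P, ∃ q : Polynomial P, ∀ x, ν (p.eval x) = q.eval (ν x)) :
    ∃ (d e : P) (α : P ≃+* P), d ≠ 0 ∧ ∀ x, ν x = d * α x + e := by
  have key : ∀ p p' : Polynomial P, (∀ x, p.eval (p'.eval x) = x) → ∃ c d : P, ∀ x, ν (p.eval x) = c * ν x + d := by
    intro p p' hp
    obtain ⟨q, hq⟩ := h p
    obtain ⟨q', hq'⟩ := h p'
    have h1 : q.comp q' = Polynomial.X := by
      apply Polynomial.funext
      intro r
      rw [Polynomial.eval_comp, Polynomial.eval_X]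
      obtain ⟨x, rfl⟩ := ν.surjective r
      rw [← hq', ← hq, hp]
    have h2 : q.natDegree * q'.natDegree = 1 := by
      rw [← Polynomial.natDegree_comp, h1, Polynomial.natDegree_X]
    have h3 : q.natDegree ≤ 1 := by
      exact le_of_eq (Nat.eq_one_of_mul_eq_one_right h2)
    refine ⟨q.coeff 1, q.coeff 0, fun x => ?_⟩
    rw [hq, Polynomial.eq_X_add_C_of_natDegree_le_one h3]
    simp
  have hd : ν 1 - ν 0 ≠ 0 := by
    rw [sub_ne_zero]
    intro h0
    exact one_ne_zero (ν.injective h0)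
  have hadd : ∀ x a, ν (x + a) = ν x + ν a - ν 0 := by
    intro x a
    by_cases ha : a = 0
    · subst ha; simp
    obtain ⟨c, d, hc⟩ := key (Polynomial.X + Polynomial.C a) (Polynomial.X - Polynomial.C a) (by simp)
    simp only [Polynomial.eval_add, Polynomial.eval_X, Polynomial.eval_C] at hc
    have c1 : c = 1 := by
      by_contra hc1
      have hc1' : 1 - c ≠ 0 := sub_ne_zero.mpr (Ne.symm hc1)
      obtain ⟨z, hz⟩ := ν.surjective (d / (1 - c))
      have := hc z
      have h2 : ν (z + a) = ν z := by
        rw [this, hz]; field_simp; ring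
      have := ν.injective h2
      exact ha (by simpa using this)
    subst c1
    have := hc 0
    rw [hc x]
    rw [zero_add] at this
    rw [this]; ring
  have hmul : ∀ x a, (ν (a * x) - ν 0) * (ν 1 - ν 0) = (ν a - ν 0) * (ν x - ν 0) := by
    intro x a
    by_cases ha : a = 0
    · subst ha; simp
    obtain ⟨c, d, hc⟩ := key (Polynomial.C a * Polynomial.X) (Polynomial.C a⁻¹ * Polynomial.X) (by simp [ha])
    simp only [Polynomial.eval_mul, Polynomial.eval_X, Polynomial.eval_C] at hc
    have h0 := hc 0
    have h1 := hc 1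
    rw [mul_zero] at h0
    rw [mul_one] at h1
    rw [hc x, h1]
    linear_combination (-ν 1 + ν x) * h0
  refine ⟨ν 1 - ν 0, ν 0, 
    { toFun := fun x => (ν x - ν 0) / (ν 1 - ν 0)
      invFun := fun t => ν.symm ((ν 1 - ν 0) * t + ν 0)
      left_inv := ?_
      right_inv := ?_
      map_add' := ?_
      map_mul' := ?_ }, hd, ?_⟩
  · intro x
    simp only
    rw [mul_div_cancel₀ _ hd]; simp
  · intro x
    simp only
    simp [hd]
  · intro x y
    have := hmul y x
    rw [div_mul_div_comm, div_eq_div_iff hd (mul_ne_zero hd hd)]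
    linear_combination (ν 1 - ν 0) * this
  · intro x y
    rw [hadd]
    ring
  · intro x
    change ν x = (ν 1 - ν 0) * ((ν x - ν 0) / (ν 1 - ν 0)) + ν 0
    field_simp; ring

/-- the polynomial map attached to an endomorphism -/
noncomputable def hatMap {P : Type*} [Field P] {n : ℕ}
    (s : MvPolynomial (Fin n) P →ₐ[P] MvPolynomial (Fin n) P) (x : Fin n → P) : Fin n → P :=
  fun i => eval x (s (X i))

lemma eval_hat {P : Type*} [Field P] {n : ℕ}
    (s : MvPolynomial (Fin n) P →ₐ[P] MvPolynomial (Fin n) P) (x : Fin n → P)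
    (g : MvPolynomial (Fin n) P) : eval x (s g) = eval (hatMap s x) g := by
  have : ((aeval x : MvPolynomial (Fin n) P →ₐ[P] P).comp s) = aeval (hatMap s x) := by
    ext i
    simp [hatMap, aeval_eq_eval]
  have := DFunLike.congr_fun this g
  simpa [aeval_eq_eval] using this

lemma retract_line {P : Type*} [Field P] [IsAlgClosed P] {n : ℕ}
    (r : MvPolynomial (Fin n) P →ₐ[P] MvPolynomial (Fin n) P)
    (hr : ∀ a, r (r a) = r a) (hne : ∃ a, (r a).totalDegree ≠ 0)
    (hfin : ∀ g : MvPolynomial (Fin n) P, (∃ x, eval x (r g) ≠ 0) →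
      {y | hatMap r y = y ∧ eval y g = 0}.Finite) :
    ∃ (b : MvPolynomial (Fin n) P) (h : Fin n → Polynomial P),
      (∀ x i, hatMap r x i = (h i).eval (eval x b)) ∧
      (∀ t, eval (fun i => (h i).eval t) b = t) ∧
      (∀ t, hatMap r (fun i => (h i).eval t) = fun i => (h i).eval t) := by
  classical
  -- minimal degree element
  have hex : ∃ m : ℕ, ∃ b, r b = b ∧ b.totalDegree = m ∧ m ≠ 0 := by
    obtain ⟨a, ha⟩ := hne
    exact ⟨_, r a, hr a, rfl, ha⟩
  obtain ⟨b, hrb, hbm, hm0⟩ := Nat.find_spec hex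
  have hmin : ∀ c, r c = c → c.totalDegree ≠ 0 → b.totalDegree ≤ c.totalDegree := by
    intro c hc hc0
    rw [hbm]
    exact Nat.find_min' hex ⟨c, hc, rfl, hc0⟩
  have hbd : b.totalDegree ≠ 0 := by rw [hbm]; exact hm0
  have hb0 : b ≠ 0 := by
    intro h; rw [h] at hbd; simp at hbd
  -- a prime factor
  have hp : ∃ p, Prime p ∧ p ∣ b ∧ (r p).totalDegree ≠ 0 := by
    by_contra hcon
    push Not at hcon
    have : ∀ c : MvPolynomial (Fin n) P, c ≠ 0 → c ∣ b → (r c).totalDegree = 0 := by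
      intro c
      induction c using UniqueFactorizationMonoid.induction_on_prime with
      | h₁ => intro h; exact absurd rfl h
      | h₂ u hu =>
        intro _ _
        have := hu.map r
        exact ((MvPolynomial.isUnit_iff_totalDegree_of_isReduced).1 this).2
      | h₃ a p ha hp ih =>
        intro _ hd
        rw [map_mul]
        have h1 := hcon p hp (dvd_of_mul_right_dvd hd)
        have h2 := ih ha (dvd_of_mul_left_dvd hd)
        have := totalDegree_mul (r p) (r a)
        omega
    have h := this b hb0 dvd_rfl
    rw [hrb] at h
    exact hbd h
  obtain ⟨p, hpp, ⟨q, hq⟩, hpd⟩ := hp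
  have hbrp : b ∣ r p := by
    have h1 : b = r p * r q := by rw [← map_mul, ← hq, hrb]
    have h2 : r p ≠ 0 := by rintro h; rw [h] at h1; simp at h1; exact hb0 h1
    have h3 : r q ≠ 0 := by rintro h; rw [h] at h1; simp at h1; exact hb0 h1
    have h4 := totalDegree_mul_of_isDomain h2 h3
    rw [← h1] at h4
    have h5 := hmin (r p) (hr p) hpd
    have h6 : (r q).totalDegree = 0 := by omega
    rw [totalDegree_eq_zero_iff_eq_C] at h6
    have hc : coeff 0 (r q) ≠ 0 := by
      intro h; rw [h] at h6; simp at h6; exact h3 h6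
    refine ⟨C (coeff 0 (r q))⁻¹, ?_⟩
    have h7 : r q * C (coeff 0 (r q))⁻¹ = 1 := by
      calc r q * C (coeff 0 (r q))⁻¹ = C (coeff 0 (r q)) * C (coeff 0 (r q))⁻¹ := by
            congr 1
        _ = 1 := by rw [← C_mul, mul_inv_cancel₀ hc, C_1]
    rw [h1, mul_assoc, h7, mul_one]
  have hprime : ∀ c d, r c = c → r d = d → b ∣ c * d → b ∣ c ∨ b ∣ d := by
    intro c d hc hd hcd
    have : p ∣ c * d := (Dvd.intro q hq.symm).trans hcd
    rcases hpp.dvd_or_dvd this with h | h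
    · left
      have := map_dvd r h
      rw [hc] at this
      exact hbrp.trans this
    · right
      have := map_dvd r h
      rw [hd] at this
      exact hbrp.trans this
  have hbu : ¬ IsUnit b := by
    intro h
    exact hbd ((MvPolynomial.isUnit_iff_totalDegree_of_isReduced).1 h).2
  have hb1 : ¬ b ∣ 1 := fun h => hbu (isUnit_of_dvd_one h)
  have hpow : ∀ c (N : ℕ), r c = c → b ∣ c ^ N → b ∣ c := by
    intro c N hc
    induction N with
    | zero => intro h; exact absurd (by simpa using h) hb1
    | succ N ih =>
      intro h
      rw [pow_succ] at h
      rcases hprime _ _ (by rw [map_pow, hc]) hc h with h | h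
      · exact ih h
      · exact h
  have hidem : ∀ x, hatMap r (hatMap r x) = hatMap r x := by
    intro x
    funext i
    change eval (hatMap r x) (r (X i)) = eval x (r (X i))
    rw [← eval_hat, hr]
  have hnull : ∀ (g c : MvPolynomial (Fin n) P), (∀ x, eval x g = 0 → eval x c = 0) → ∃ N : ℕ, g ∣ c ^ N := by
    intro g c hc
    have : c ∈ (Ideal.span {g}).radical := by
      rw [← vanishingIdeal_zeroLocus_eq_radical (K := P)]
      rw [mem_vanishingIdeal_iff]
      intro x hx
      have := hx g (Ideal.mem_span_singleton_self g)
      rw [aeval_eq_eval] at *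
      exact hc x this
    obtain ⟨N, hN⟩ := this
    exact ⟨N, Ideal.mem_span_singleton.1 hN⟩
  have hSfin : {y | hatMap r y = y ∧ eval y b = 0}.Finite := by
    apply hfin
    by_contra hcon
    push Not at hcon
    apply hb0
    apply MvPolynomial.funext
    intro x
    have := hcon x
    rw [hrb] at this
    simpa using this
  have hy : ∃ y, ∀ c, r c = c → eval y c = 0 → b ∣ c := by
    by_contra hcon
    push Not at hcon
    choose f hf1 hf2 hf3 using hcon
    have hprod : ∀ S : Finset (Fin n → P), r (∏ y ∈ S, f y) = ∏ y ∈ S, f y := by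
      intro S; rw [map_prod]; exact Finset.prod_congr rfl (fun y _ => hf1 y)
    have hnd : ∀ S : Finset (Fin n → P), ¬ b ∣ ∏ y ∈ S, f y := by
      intro S
      induction S using Finset.induction_on with
      | empty => simpa using hb1
      | insert a S ha ih =>
        rw [Finset.prod_insert ha]
        intro h
        rcases hprime _ _ (hf1 a) (hprod S) h with h | h
        · exact hf3 a h
        · exact ih h
    obtain ⟨N, hN⟩ := hnull b (∏ y ∈ hSfin.toFinset, f y) (by
      intro x hx
      rw [← hprod, eval_hat, map_prod]
      apply Finset.prod_eq_zero (i := hatMap r x)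
      · simp only [Set.Finite.mem_toFinset, Set.mem_ofPred_eq]
        refine ⟨hidem x, ?_⟩
        rw [← eval_hat, hrb, hx]
      · exact hf2 _)
    exact hnd _ (hpow _ N (hprod _) hN)
  obtain ⟨y, hy⟩ := hy
  have hgen : ∀ (m : ℕ) (c : MvPolynomial (Fin n) P), r c = c → c.totalDegree ≤ m →
      ∃ g : Polynomial P, c = Polynomial.aeval b g := by
    intro m
    induction m with
    | zero =>
      intro c hc hd
      have := totalDegree_eq_zero_iff_eq_C.1 (Nat.le_zero.1 hd)
      refine ⟨Polynomial.C (coeff 0 c), ?_⟩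
      rw [Polynomial.aeval_C]
      exact this
    | succ m ih =>
      intro c hc hd
      have h1 : r (c - C (eval y c)) = c - C (eval y c) := by
        rw [map_sub, hc, ← algebraMap_eq, AlgHom.commutes]
      obtain ⟨d, hd1⟩ := hy (c - C (eval y c)) h1 (by simp)
      have hd2 : r d = d := by
        apply mul_left_cancel₀ hb0
        rw [← hd1]
        nth_rewrite 1 [← hrb]
        rw [← map_mul, ← hd1, h1]
      have hdd : d.totalDegree ≤ m := by
        by_cases hd0 : d = 0
        · rw [hd0]; simp
        have h2 := totalDegree_mul_of_isDomain hb0 hd0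
        have h3 : (c - C (eval y c)).totalDegree ≤ c.totalDegree := totalDegree_sub_C_le c _
        rw [hd1] at h3
        omega
      obtain ⟨g, hg⟩ := ih d hd2 hdd
      refine ⟨Polynomial.X * g + Polynomial.C (eval y c), ?_⟩
      rw [map_add, map_mul, Polynomial.aeval_X, ← hg, ← hd1, Polynomial.aeval_C, algebraMap_eq]
      ring
  choose h hh using fun i => hgen _ (r (X i)) (hr _) le_rfl
  have H1 : ∀ x i, hatMap r x i = (h i).eval (eval x b) := by
    intro x i
    change eval x (r (X i)) = _
    rw [hh i, Polynomial.aeval_def, Polynomial.hom_eval₂, ← Polynomial.eval₂_id]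
    congr 1
    ext; simp [algebraMap_eq]
  have hsurj : ∀ t, ∃ x, eval x b = t := by
    intro t
    by_contra hcon
    push Not at hcon
    obtain ⟨N, hN⟩ := hnull (b - C t) 1 (by
      intro x hx
      exfalso
      apply hcon x
      simpa [sub_eq_zero] using hx)
    rw [one_pow] at hN
    have := ((MvPolynomial.isUnit_iff_totalDegree_of_isReduced).1 (isUnit_of_dvd_one hN)).2
    rw [totalDegree_eq_zero_iff_eq_C] at this
    apply hbd
    rw [sub_eq_iff_eq_add, ← C_add] at this
    rw [this, totalDegree_C]
  have hht : ∀ x, (fun i => (h i).eval (eval x b)) = hatMap r x := by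
    intro x; funext i; rw [H1]
  refine ⟨b, h, H1, ?_, ?_⟩
  · intro t
    obtain ⟨x, rfl⟩ := hsurj t
    rw [hht, ← eval_hat, hrb]
  · intro t
    obtain ⟨x, rfl⟩ := hsurj t
    rw [hht, hidem]

/-- constant endomorphism -/
noncomputable def cst {P : Type*} [Field P] {n : ℕ} (a : Fin n → P) :
    MvPolynomial (Fin n) P →ₐ[P] MvPolynomial (Fin n) P :=
  (Algebra.ofId P (MvPolynomial (Fin n) P)).comp (aeval a)

lemma cst_apply {P : Type*} [Field P] {n : ℕ} (a : Fin n → P) (g : MvPolynomial (Fin n) P) :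
    cst a g = C (eval a g) := by
  simp [cst, Algebra.ofId_apply, aeval_eq_eval, algebraMap_eq]

lemma cst_inj {P : Type*} [Field P] {n : ℕ} {a b : Fin n → P} (h : cst a = cst b) : a = b := by
  funext i
  have := DFunLike.congr_fun h (X i)
  rw [cst_apply, cst_apply] at this
  simpa using C_injective _ _ this

lemma mul_cst {P : Type*} [Field P] {n : ℕ} (a : Fin n → P)
    (s : MvPolynomial (Fin n) P →ₐ[P] MvPolynomial (Fin n) P) : s * cst a = cst a := by
  apply AlgHom.ext
  intro g
  rw [AlgHom.mul_apply, cst_apply, ← algebraMap_eq, AlgHom.commutes]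

lemma cst_mul {P : Type*} [Field P] {n : ℕ} (a : Fin n → P)
    (s : MvPolynomial (Fin n) P →ₐ[P] MvPolynomial (Fin n) P) :
    cst a * s = cst (hatMap s a) := by
  apply AlgHom.ext
  intro g
  rw [AlgHom.mul_apply, cst_apply, cst_apply, eval_hat]

lemma exists_cst {P : Type*} [Field P] {n : ℕ}
    (τ : (MvPolynomial (Fin n) P →ₐ[P] MvPolynomial (Fin n) P) ≃*
         (MvPolynomial (Fin n) P →ₐ[P] MvPolynomial (Fin n) P)) (a : Fin n → P) :
    ∃ b, τ (cst a) = cst b := by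
  refine ⟨hatMap (τ (cst a)) 0, ?_⟩
  rw [← cst_mul]
  conv_rhs => rw [← τ.apply_symm_apply (cst 0), ← map_mul, mul_cst]

lemma exists_mu {P : Type*} [Field P] {n : ℕ}
    (τ : (MvPolynomial (Fin n) P →ₐ[P] MvPolynomial (Fin n) P) ≃*
         (MvPolynomial (Fin n) P →ₐ[P] MvPolynomial (Fin n) P)) :
    ∃ μ : (Fin n → P) ≃ (Fin n → P), ∀ s x, μ (hatMap s x) = hatMap (τ s) (μ x) := by
  choose f hf using exists_cst τ
  choose g hg using exists_cst τ.symm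
  refine ⟨⟨f, g, ?_, ?_⟩, ?_⟩
  · intro x
    apply cst_inj
    rw [← hg, ← hf, τ.symm_apply_apply]
  · intro x
    apply cst_inj
    rw [← hf, ← hg, τ.apply_symm_apply]
  · intro s x
    apply cst_inj
    change cst (f _) = cst (hatMap _ (f x))
    rw [← hf, ← cst_mul, ← cst_mul, map_mul, hf]

lemma hat_aeval {P : Type*} [Field P] {n : ℕ} (F : Fin n → MvPolynomial (Fin n) P)
    (x : Fin n → P) : hatMap (aeval F) x = fun i => eval x (F i) := by
  funext i; simp [hatMap]

lemma eval_curve {P : Type*} [Field P] {n : ℕ} (h : Fin n → Polynomial P)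
    (g : MvPolynomial (Fin n) P) (t : P) :
    (aeval h g).eval t = eval (fun i => (h i).eval t) g := by
  have : ((Polynomial.aeval t : Polynomial P →ₐ[P] P).comp (aeval h)) =
      (aeval (fun i => (h i).eval t) : MvPolynomial (Fin n) P →ₐ[P] P) := by
    ext i
    simp [Polynomial.aeval_def]
  have := DFunLike.congr_fun this g
  simpa [aeval_eq_eval, Polynomial.aeval_def] using this

lemma eval_poly_aeval {P : Type*} [Field P] {n : ℕ} (p : Polynomial P)
    (g : MvPolynomial (Fin n) P) (x : Fin n → P) :
    eval x (Polynomial.aeval g p) = p.eval (eval x g) := by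
  rw [Polynomial.aeval_def, Polynomial.hom_eval₂, ← Polynomial.eval₂_id]
  congr 1
  ext; simp [algebraMap_eq]

lemma eval_map_equiv {P : Type*} [Field P] {n : ℕ} (α : P ≃+* P)
    (g : MvPolynomial (Fin n) P) (x : Fin n → P) :
    eval x (map (α : P →+* P) g) = α (eval (fun i => α.symm (x i)) g) := by
  induction g using MvPolynomial.induction_on with
  | C a => simp
  | add p q hp hq => simp [hp, hq]
  | mul_X p i hp => simp only [map_mul, hp, map_X, eval_X, RingEquiv.apply_symm_apply]

/-- Main theorem: Over an algebraically closed field P, every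
automorphism τ of the monoid End(P[x_1,…,x_n]) of P-algebra endomorphisms is
semiinner: there exist a field automorphism α of P and a P-algebra
automorphism η of P[X] such that, with μ = ᾱ ∘ η (ᾱ acting on coefficients),
τ(s) = μ ∘ s ∘ μ⁻¹ for every endomorphism s. -/
theorem aut_end_semiinner {P : Type*} [Field P] [IsAlgClosed P]
    (n : ℕ) (hn : 1 ≤ n)
    (τ : (MvPolynomial (Fin n) P →ₐ[P] MvPolynomial (Fin n) P) ≃*
         (MvPolynomial (Fin n) P →ₐ[P] MvPolynomial (Fin n) P)) :
    ∃ (α : P ≃+* P) (η : MvPolynomial (Fin n) P ≃ₐ[P] MvPolynomial (Fin n) P),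
      ∀ (s : MvPolynomial (Fin n) P →ₐ[P] MvPolynomial (Fin n) P)
        (u : MvPolynomial (Fin n) P),
        τ s u =
          MvPolynomial.map (α : P →+* P)
            (η (s (η.symm (MvPolynomial.map (α.symm : P →+* P) u)))) := by
  classical
  obtain ⟨μ, hμ⟩ := exists_mu τ
  have hμ' : ∀ s x, μ.symm (hatMap s x) = hatMap (τ.symm s) (μ.symm x) := by
    intro s x
    rw [Equiv.symm_apply_eq, hμ, τ.apply_symm_apply, Equiv.apply_symm_apply]
  let i0 : Fin n := ⟨0, hn⟩
  let ι : P → (Fin n → P) := fun c => Pi.single i0 c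
  have hι : ∀ c, ι c i0 = c := fun c => by simp [ι]
  have hιinj : ∀ c d, ι c = ι d → c = d := fun c d h => by rw [← hι c, h, hι]
  let S : MvPolynomial (Fin n) P → (MvPolynomial (Fin n) P →ₐ[P] MvPolynomial (Fin n) P) :=
    fun g => aeval (Pi.single i0 g)
  have hS : ∀ g x, hatMap (S g) x = ι (eval x g) := by
    intro g x
    simp only [S, ι]
    rw [hat_aeval]
    funext i
    by_cases h : i = i0
    · subst h; simp
    · simp [h]
  let r := τ (S (X i0))
  have hrμ : ∀ y, hatMap r y = μ (ι (μ.symm y i0)) := by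
    intro y
    have := hμ (S (X i0)) (μ.symm y)
    rw [Equiv.apply_symm_apply, hS, eval_X] at this
    exact this.symm
  have hrι : ∀ c, hatMap r (μ (ι c)) = μ (ι c) := by
    intro c
    rw [hrμ, Equiv.symm_apply_apply, hι]
  have hridem : ∀ a, r (r a) = r a := by
    intro a
    apply MvPolynomial.funext
    intro x
    rw [eval_hat, eval_hat, eval_hat, hrμ x, hrι]
  have hne : ∃ a, (r a).totalDegree ≠ 0 := by
    by_contra hcon
    push Not at hcon
    have : hatMap r (μ (ι 0)) = hatMap r (μ (ι 1)) := by
      funext i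
      simp only [hatMap]
      rw [totalDegree_eq_zero_iff_eq_C.1 (hcon (X i))]
      simp
    rw [hrι, hrι] at this
    exact zero_ne_one (hιinj _ _ (μ.injective this))
  have hfin : ∀ g : MvPolynomial (Fin n) P, (∃ x, eval x (r g) ≠ 0) →
      {y | hatMap r y = y ∧ eval y g = 0}.Finite := by
    rintro g ⟨x0, hx0⟩
    rw [eval_hat, hrμ] at hx0
    set c0 := μ.symm x0 i0
    have ht : ∀ c, hatMap (τ.symm (S g)) (ι c) = μ.symm (ι (eval (μ (ι c)) g)) := by
      intro c
      rw [← hS, hμ', Equiv.symm_apply_apply]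
    have hT : {c | eval (μ (ι c)) g = 0}.Finite := by
      have h1 : hatMap (τ.symm (S g)) (ι c0) ≠ μ.symm (ι 0) := by
        rw [ht]
        intro h
        exact hx0 (hιinj _ _ (μ.symm.injective h))
      obtain ⟨j, hj⟩ := Function.ne_iff.1 h1
      let q : Polynomial P := aeval (Pi.single i0 Polynomial.X) (τ.symm (S g) (X j)) -
        Polynomial.C (μ.symm (ι 0) j)
      have hq : ∀ c, q.eval c = hatMap (τ.symm (S g)) (ι c) j - μ.symm (ι 0) j := by
        intro c
        simp only [q]
        rw [Polynomial.eval_sub, Polynomial.eval_C, eval_curve]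
        congr 2
        congr 1
        funext i
        simp only [ι]
        by_cases h : i = i0
        · subst h; simp
        · simp [h]
      have hq0 : q ≠ 0 := by
        intro h
        have := hq c0
        rw [h, Polynomial.eval_zero] at this
        exact hj (sub_eq_zero.1 this.symm)
      refine (q.roots.toFinset.finite_toSet).subset ?_
      intro c hc
      simp only [Finset.mem_coe, Multiset.mem_toFinset, Polynomial.mem_roots hq0, Polynomial.IsRoot]
      rw [hq, ht]
      have hc' : eval (μ (ι c)) g = 0 := hc
      rw [hc', sub_self]
    refine (hT.image (fun c => μ (ι c))).subset ?_
    rintro y ⟨h1, h2⟩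
    refine ⟨μ.symm y i0, ?_, ?_⟩
    · change eval (μ (ι _)) g = 0
      rw [← hrμ, h1, h2]
    · change μ (ι _) = y
      rw [← hrμ, h1]
  obtain ⟨b, h, hb1, hb2, hb3⟩ := retract_line r hridem hne hfin
  let H : P → (Fin n → P) := fun t i => (h i).eval t
  have hH1 : ∀ x, hatMap r x = H (eval x b) := fun x => funext (hb1 x)
  have hH2 : ∀ t, eval (H t) b = t := hb2
  have hH3 : ∀ t, hatMap r (H t) = H t := hb3
  let ν : P ≃ P :=
    { toFun := fun c => eval (μ (ι c)) b
      invFun := fun t => μ.symm (H t) i0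
      left_inv := by
        intro c
        change μ.symm (H (eval (μ (ι c)) b)) i0 = c
        rw [← hH1, hrι, Equiv.symm_apply_apply, hι]
      right_inv := by
        intro t
        change eval (μ (ι (μ.symm (H t) i0))) b = t
        rw [← hrμ, hH3, hH2] }
  have hν : ∀ c, ν c = eval (μ (ι c)) b := fun _ => rfl
  have hν' : ∀ t, ν.symm t = μ.symm (H t) i0 := fun _ => rfl
  obtain ⟨d, e, α, hd, hα⟩ := field_case ν (by
    intro p
    refine ⟨aeval h (τ (S (Polynomial.aeval (X i0) p)) b), fun c => ?_⟩
    rw [eval_curve]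
    change _ = eval (H (ν c)) _
    have h1 : H (ν c) = μ (ι c) := by rw [hν, ← hH1, hrι]
    rw [h1, eval_hat, ← hμ, hS, eval_poly_aeval, eval_X, hι, hν])
  have claim1 : ∀ g : MvPolynomial (Fin n) P, ∃ Q : MvPolynomial (Fin n) P,
      ∀ x, eval x Q = α (eval (μ.symm x) g) := by
    intro g
    refine ⟨C d⁻¹ * (τ (S g) b - C e), fun x => ?_⟩
    have h1 : eval x (τ (S g) b) = ν (eval (μ.symm x) g) := by
      rw [hν, ← hS, hμ, Equiv.apply_symm_apply, eval_hat]
    rw [map_mul, map_sub, eval_C, eval_C, h1, hα]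
    field_simp
    ring
  have claim2 : ∀ p : MvPolynomial (Fin n) P, ∃ Q : MvPolynomial (Fin n) P,
      ∀ x, eval x Q = α.symm (eval (μ x) p) := by
    intro p
    refine ⟨τ.symm (aeval (fun i => Polynomial.aeval (C d * p + C e) (h i))) (X i0), fun x => ?_⟩
    have h1 : ∀ w, α.symm w = ν.symm (d * w + e) := by
      intro w
      rw [Equiv.eq_symm_apply, hα, RingEquiv.apply_symm_apply]
    rw [h1, hν']
    have h2 : H (d * eval (μ x) p + e) =
        hatMap (aeval (fun i => Polynomial.aeval (C d * p + C e) (h i))) (μ x) := by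
      rw [hat_aeval]
      funext i
      rw [eval_poly_aeval]
      simp [H]
    rw [h2, hμ', Equiv.symm_apply_apply]
    rfl
  choose G0 hG0 using fun i => claim1 (X i)
  choose K hK using fun i => claim2 (X i)
  let G : Fin n → MvPolynomial (Fin n) P := fun i => map (α.symm : P →+* P) (G0 i)
  have hG : ∀ z, hatMap (aeval G) z = μ.symm (fun i => α (z i)) := by
    intro z
    rw [hat_aeval]
    funext i
    simp only [G]
    rw [eval_map_equiv, hG0]
    simp
  have hK' : ∀ z, hatMap (aeval K) z = fun i => α.symm (μ z i) := by
    intro z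
    rw [hat_aeval]
    funext i
    rw [hK, eval_X]
  let η : MvPolynomial (Fin n) P ≃ₐ[P] MvPolynomial (Fin n) P :=
    AlgEquiv.ofAlgHom (aeval G) (aeval K)
      (by
        apply AlgHom.ext
        intro u
        apply MvPolynomial.funext
        intro x
        rw [AlgHom.comp_apply, eval_hat, eval_hat, hK', hG]
        simp)
      (by
        apply AlgHom.ext
        intro u
        apply MvPolynomial.funext
        intro x
        rw [AlgHom.comp_apply, eval_hat, eval_hat, hG, hK']
        simp)
  have hη : ∀ w, η w = aeval G w := fun _ => rfl
  have hη' : ∀ w, η.symm w = aeval K w := fun _ => rfl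
  refine ⟨α, η, fun s u => ?_⟩
  apply MvPolynomial.funext
  intro x
  rw [eval_map_equiv, hη, hη', eval_hat (aeval G), eval_hat s, eval_hat (aeval K), hG, hK',
    eval_map_equiv, hμ, eval_hat]
  simp
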